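/- Let S ⊆ ℝ be a Lebesgue measurable set. Fix an integer ℓ ≥ 0, a positive integer h, and integers M, N with 2^ℓ ≤ M < N and N ≥ 2^{ℓ+1}. Then there is a measurable exceptional set of pairs (θ, η), of 2-dimensional Lebesgue measure at most 2^{ℓ+13}/(h·log²(1+h)), such that every pair (θ, η) with 2^ℓ ≤ θ ≤ 2^{ℓ+1} and 0 ≤ η < θ outside this exceptional set satisfies |#{k ∈ ℕ : kθ + η ∈ S ∩ [0, N]} − (1/θ)·λ₁(S ∩ [0, N])| < 2N/M + (hNM)^{1/2} log(1+h) + 2. -/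

import Mathlib

open MeasureTheory
open Real Complex in
noncomputable def ee (u x : ℝ) : ℂ := Complex.exp (((-(2*π*u*x) : ℝ) : ℂ) * I)

lemma norm_ee (u x : ℝ) : ‖ee u x‖ = 1 := Complex.norm_exp_ofReal_mul_I _

lemma ee_add_left (u v x : ℝ) : ee (u+v) x = ee u x * ee v x := by
  unfold ee; rw [← Complex.exp_add]; congr 1; push_cast; ring
lemma ee_add_right (u x y : ℝ) : ee u (x+y) = ee u x * ee u y := by
  unfold ee; rw [← Complex.exp_add]; congr 1; push_cast; ring
lemma ee_int (n : ℤ) (u x : ℝ) (h : u * x = n) : ee u x = 1 := by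
  unfold ee
  rw [Complex.exp_eq_one_iff]
  refine ⟨-n, ?_⟩
  have : (u:ℂ) * x = n := by exact_mod_cast h
  push_cast
  linear_combination (-2 * (Real.pi:ℂ) * Complex.I) * this
lemma continuous_ee : Continuous (fun p : ℝ × ℝ => ee p.1 p.2) := by
  unfold ee; fun_prop

lemma fourier_eq_ee {T : ℝ} (m : ℤ) (x : ℝ) : fourier (-m) (x : AddCircle T) = ee (m/T) x := by
  rw [fourier_coe_apply, ee]; congr 1; push_cast; ring

lemma parseval {T C : ℝ} (hT : 0 < T) (f : ℝ → ℂ) (hf : Measurable f) (hC : ∀ x, ‖f x‖ ≤ C) :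
    ∑' m : ℤ, ENNReal.ofReal (‖∫ x in (0:ℝ)..T, f x * ee (m/T) x‖^2) =
      ENNReal.ofReal T * ∫⁻ x in Set.Ioc 0 T, ENNReal.ofReal (‖f x‖^2) := by
  have hL : MemLp f 2 (volume.restrict (Set.Ioc 0 T)) :=
    MemLp.of_bound hf.aestronglyMeasurable C (Filter.Eventually.of_forall hC)
  have h := hasSum_sq_fourierCoeffOn hT hL
  have h2 := h.mul_left (T^2)
  have e1 : ∀ m : ℤ, T^2 * ‖fourierCoeffOn hT f m‖^2 = ‖∫ x in (0:ℝ)..T, f x * ee (m/T) x‖^2 := by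
    intro m
    rw [fourierCoeffOn_eq_integral]
    simp only [sub_zero, fourier_eq_ee, smul_eq_mul, norm_smul, mul_pow]
    rw [← mul_assoc, Real.norm_eq_abs, abs_of_pos (by positivity)]
    simp only [mul_comm (ee _ _)]
    field_simp
  simp only [e1] at h2
  rw [← ENNReal.ofReal_tsum_of_nonneg (fun _ => by positivity) h2.summable, h2.tsum_eq]
  rw [← ofReal_integral_eq_lintegral_ofReal hL.integrable_norm_pow' (Filter.Eventually.of_forall fun _ => by positivity)]
  rw [← ENNReal.ofReal_mul hT.le, intervalIntegral.integral_of_le hT.le]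
  congr 1
  simp only [smul_eq_mul, sub_zero]
  field_simp

noncomputable def GG (g : ℝ → ℂ) (N u : ℝ) : ℂ := ∫ x in (0:ℝ)..N, g x * ee u x

lemma continuous_GG (g : ℝ → ℂ) (N : ℝ) (hg : Measurable g) (hC : ∀ x, ‖g x‖ ≤ 1) : Continuous (GG g N) := by
  unfold GG
  apply intervalIntegral.continuous_of_dominated_interval (bound := fun _ => 1)
  · intro u
    exact (hg.mul (continuous_ee.comp (Continuous.prodMk_right u)).measurable).aestronglyMeasurable
  · intro u
    refine Filter.Eventually.of_forall fun x _ => ?_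
    rw [norm_mul, norm_ee, mul_one]; exact hC x
  · exact intervalIntegrable_const
  · refine Filter.Eventually.of_forall fun x _ => ?_
    exact continuous_const.mul (continuous_ee.comp (Continuous.prodMk_left x))

lemma plancherel (g : ℝ → ℂ) (N : ℝ) (hN : 0 < N) (hg : Measurable g) (hC : ∀ x, ‖g x‖ ≤ 1) :
    ∫⁻ u, ENNReal.ofReal (‖GG g N u‖^2) ≤ ENNReal.ofReal N := by
  have hc := continuous_GG g N hg hC
  have key : ∀ b : ℝ, ∑' m : ℤ, ENNReal.ofReal (‖GG g N (m/N + b)‖^2) ≤ ENNReal.ofReal (N*N) := by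
    intro b
    have := parseval (C := 1) hN (fun x => g x * ee b x)
      (hg.mul (continuous_ee.comp (Continuous.prodMk_right b)).measurable)
      (fun x => by rw [norm_mul, norm_ee, mul_one]; exact hC x)
    have e : ∀ m : ℤ, ∫ x in (0:ℝ)..N, g x * ee b x * ee (m/N) x = GG g N (m/N+b) := by
      intro m
      unfold GG
      congr 1; ext x; rw [ee_add_left]; ring
    simp only [e] at this
    rw [this, ENNReal.ofReal_mul hN.le]
    gcongr
    calc _ ≤ ∫⁻ x in Set.Ioc 0 N, 1 := by
          apply lintegral_mono
          intro x
          dsimp only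
          rw [norm_mul, norm_ee, mul_one, ← ENNReal.ofReal_one]
          apply ENNReal.ofReal_le_ofReal
          exact pow_le_one₀ (norm_nonneg _) (hC x)
      _ = _ := by simp
  have hT : 0 < 1/N := by positivity
  have fd := isAddFundamentalDomain_Ioc hT 0
  rw [fd.lintegral_eq_tsum'']
  have e2 : ∀ a : AddSubgroup.zmultiples (1/N), ∫⁻ x in Set.Ioc 0 (0+1/N), ENNReal.ofReal (‖GG g N (a +ᵥ x)‖^2) 
     = ∫⁻ x in Set.Ioc 0 (0+1/N), ENNReal.ofReal (‖GG g N ((a:ℝ) + x)‖^2) := fun a => rfl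
  simp only [e2]
  rw [← lintegral_tsum]
  · calc _ ≤ ∫⁻ x in Set.Ioc 0 (0+1/N), ENNReal.ofReal (N*N) := by
          apply lintegral_mono
          intro x
          refine le_trans (le_of_eq ?_) (key x)
          have hinj : Function.Injective (fun n : ℤ => n • (1/N)) := by
            intro a b hab
            simp only [zsmul_eq_mul] at hab
            have := mul_right_cancel₀ hT.ne' hab
            exact_mod_cast this
          let φ : ℤ → AddSubgroup.zmultiples (1/N) := fun n => ⟨n • (1/N), n, rfl⟩
          have hφ : Function.Bijective φ := by
            constructor
            · intro a b hab
              exact hinj (congrArg Subtype.val hab)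
            · rintro ⟨y, n, hn⟩
              exact ⟨n, Subtype.ext hn⟩
          dsimp only
          rw [← (Equiv.ofBijective φ hφ).tsum_eq]
          refine tsum_congr fun m => ?_
          have : ((Equiv.ofBijective φ hφ m : AddSubgroup.zmultiples (1/N)) : ℝ) = m / N := by
            change m • (1/N) = _
            rw [zsmul_eq_mul]; ring
          rw [this]
      _ ≤ _ := by
          simp only [lintegral_const, Measure.restrict_apply_univ, Real.volume_Ioc]
          rw [← ENNReal.ofReal_mul (by positivity)]
          apply ENNReal.ofReal_le_ofReal
          apply le_of_eq; field_simp; ring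
  · intro a
    exact (ENNReal.continuous_ofReal.comp ((hc.comp (continuous_const.add continuous_id)).norm.pow 2)).aemeasurable

lemma integral_ee (m : ℤ) (θ : ℝ) (hθ : 0 < θ) :
    ∫ x in (0:ℝ)..θ, ee (m/θ) x = if m = 0 then (θ:ℂ) else 0 := by
  split_ifs with hm
  · subst hm; simp [ee]
  · have hc : (-(2 * Real.pi * (m/θ)) : ℂ) * Complex.I ≠ 0 := by
      have h1 : (m:ℂ) ≠ 0 := by exact_mod_cast hm
      have h2 : (θ:ℂ) ≠ 0 := by exact_mod_cast hθ.ne'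
      have h3 : (Real.pi:ℂ) ≠ 0 := by exact_mod_cast Real.pi_ne_zero
      simp [h1, h2, h3]
    have h := integral_exp_mul_complex (a := 0) (b := θ) hc
    have e : ∀ x : ℝ, ee (m/θ) x = Complex.exp ((-(2 * Real.pi * (m/θ)) : ℂ) * Complex.I * x) := by
      intro x; unfold ee; congr 1; push_cast; ring
    simp only [← e] at h
    rw [h, ee_int m (m/θ) θ (by field_simp), ee_int 0 (m/θ) 0 (by simp)]
    simp

noncomputable def FF (g : ℝ → ℂ) (N : ℕ) (θ η : ℝ) : ℂ :=
  ∑ k ∈ Finset.range (N+1), g (k * θ + η) - GG g N 0 / θ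

lemma ii_mul_ee (g : ℝ → ℂ) (hg : Measurable g) (hC : ∀ x, ‖g x‖ ≤ 1) (u a b : ℝ) :
    IntervalIntegrable (fun x => g x * ee u x) volume a b := by
  refine (intervalIntegrable_const (c := (1:ℝ))).mono_fun
    (hg.mul (continuous_ee.comp (Continuous.prodMk_right u)).measurable).aestronglyMeasurable
    (Filter.Eventually.of_forall fun x => ?_)
  simpa [norm_ee] using hC x

lemma FF_coeff (g : ℝ → ℂ) (N : ℕ) (hg : Measurable g) (hC : ∀ x, ‖g x‖ ≤ 1)
    (h0 : ∀ x, (N:ℝ) < x → g x = 0) (θ : ℝ) (hθ : 1 ≤ θ) (m : ℤ) :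
    ∫ x in (0:ℝ)..θ, FF g N θ x * ee (m/θ) x = if m = 0 then 0 else GG g N (m/θ) := by
  have hθ0 : 0 < θ := by linarith
  have hshift : ∀ k : ℕ, ∀ x, g (k*θ+x) * ee (m/θ) x = g (k*θ+x) * ee (m/θ) (k*θ+x) := by
    intro k x
    rw [ee_add_right, ee_int (m*k) (m/θ) (k*θ) (by push_cast; field_simp), one_mul]
  have e1 : ∀ x, FF g N θ x * ee (m/θ) x =
      ∑ k ∈ Finset.range (N+1), g (k*θ+x) * ee (m/θ) (k*θ+x) - GG g N 0 / θ * ee (m/θ) x := by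
    intro x
    rw [FF, sub_mul, Finset.sum_mul]
    simp only [hshift]
  have hi : ∀ k : ℕ, IntervalIntegrable (fun x => g (k*θ+x) * ee (m/θ) (k*θ+x)) volume 0 θ := by
    intro k
    simp only [← hshift]
    exact ii_mul_ee (fun x => g (k*θ+x)) (hg.comp (by fun_prop)) (fun x => hC _) _ _ _
  have hi2 : IntervalIntegrable (fun x => GG g N 0 / θ * ee (m/θ) x) volume 0 θ :=
    (continuous_const.mul (continuous_ee.comp (Continuous.prodMk_right _))).intervalIntegrable _ _
  simp only [e1]
  rw [intervalIntegral.integral_sub (by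
    have := IntervalIntegrable.sum (Finset.range (N+1)) (fun k _ => hi k)
    refine this.congr (fun x _ => ?_)
    simp) hi2]
  rw [intervalIntegral.integral_finsetSum (fun k _ => hi k), intervalIntegral.integral_const_mul, integral_ee _ _ hθ0]
  have e2 : ∀ k : ℕ, ∫ x in (0:ℝ)..θ, g (k*θ+x) * ee (m/θ) (k*θ+x) =
      ∫ x in ((k:ℕ):ℝ)*θ..((k+1:ℕ):ℝ)*θ, g x * ee (m/θ) x := by
    intro k
    rw [intervalIntegral.integral_comp_add_left (fun x => g x * ee (m/θ) x) (k*θ)]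
    congr 1
    · ring
    · push_cast; ring
  simp only [e2]
  rw [intervalIntegral.sum_integral_adjacent_intervals (a := fun k : ℕ => (k:ℝ)*θ) (fun k _ => ii_mul_ee g hg hC _ _ _)]
  have e3 : ∫ x in (((0:ℕ):ℝ)*θ)..(((N+1:ℕ):ℝ)*θ), g x * ee (m/θ) x = GG g N (m/θ) := by
    rw [← intervalIntegral.integral_add_adjacent_intervals (b := (N:ℝ)) (ii_mul_ee g hg hC _ _ _) (ii_mul_ee g hg hC _ _ _)]
    have hle : (N:ℝ) ≤ ((N+1:ℕ):ℝ)*θ := by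
      push_cast; nlinarith [(Nat.cast_nonneg N : (0:ℝ) ≤ N)]
    rw [intervalIntegral.integral_of_le hle]
    rw [setIntegral_congr_fun (g := fun _ => (0:ℂ)) measurableSet_Ioc (fun x hx => by
      simp [h0 x hx.1])]
    simp [GG]
  rw [e3]
  split_ifs with hm
  · subst hm
    have : (θ:ℂ) ≠ 0 := by exact_mod_cast hθ0.ne'
    simp only [Int.cast_zero, zero_div]
    field_simp; simp
  · simp

lemma FF_meas (g : ℝ → ℂ) (N : ℕ) (hg : Measurable g) : Measurable (fun p : ℝ × ℝ => FF g N p.1 p.2) := by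
  unfold FF
  have : ∀ k : ℕ, Measurable (fun p : ℝ × ℝ => g (k * p.1 + p.2)) := fun k => hg.comp (by fun_prop)
  fun_prop

lemma FF_var (g : ℝ → ℂ) (N : ℕ) (hg : Measurable g) (hC : ∀ x, ‖g x‖ ≤ 1)
    (h0 : ∀ x, (N:ℝ) < x → g x = 0) (θ : ℝ) (hθ : 1 ≤ θ) :
    ∫⁻ η in Set.Ioc 0 θ, ENNReal.ofReal (‖FF g N θ η‖^2) =
      ∑' m : ℤ, ENNReal.ofReal (1/θ) * (if m = 0 then 0 else ENNReal.ofReal (‖GG g N (m/θ)‖^2)) := by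
  have hθ0 : 0 < θ := by linarith
  have h := parseval (C := (N+1) + ‖GG g N 0 / θ‖) hθ0 (FF g N θ)
    ((FF_meas g N hg).comp (by fun_prop : Measurable (fun η : ℝ => (θ, η)))) (by
      intro x
      unfold FF
      refine (norm_sub_le _ _).trans ?_
      gcongr
      refine (norm_sum_le _ _).trans ?_
      refine (Finset.sum_le_sum (fun k _ => hC _)).trans ?_
      simp)
  simp only [FF_coeff g N hg hC h0 θ hθ] at h
  rw [ENNReal.tsum_mul_left]
  have e : ∀ m : ℤ, (if m = 0 then 0 else ENNReal.ofReal (‖GG g N (m/θ)‖^2)) =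
     ENNReal.ofReal (‖if m = 0 then 0 else GG g N (m/θ)‖^2) := by
    intro m; split_ifs <;> simp
  simp only [e]
  rw [h, ← mul_assoc, ← ENNReal.ofReal_mul (by positivity)]
  rw [one_div_mul_cancel hθ0.ne']; simp

noncomputable def ww (L : ℝ) (m : ℤ) (u : ℝ) : ENNReal :=
  {u : ℝ | m ≠ 0 ∧ L * |u| ≤ |(m:ℝ)| ∧ |(m:ℝ)| ≤ 2 * L * |u|}.indicator
    (fun _ => ENNReal.ofReal (2 * L / |(m:ℝ)|)) u

lemma ww_meas (L : ℝ) (m : ℤ) : Measurable (ww L m) := by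
  apply Measurable.indicator measurable_const
  refine MeasurableSet.inter (MeasurableSet.const _) (MeasurableSet.inter ?_ ?_)
  · exact measurableSet_le (f := fun u : ℝ => L * |u|) (by fun_prop) (by fun_prop)
  · exact measurableSet_le (g := fun u : ℝ => 2 * L * |u|) (by fun_prop) (by fun_prop)

lemma ww_sum (L : ℝ) (hL : 0 < L) (u : ℝ) : ∑' m : ℤ, ww L m u ≤ ENNReal.ofReal (12 * L) := by
  set x := L * |u| with hx
  have hx0 : 0 ≤ x := by positivity
  have hone : ∀ m : ℤ, m ≠ 0 → (1:ℝ) ≤ |(m:ℝ)| := by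
    intro m hm
    exact_mod_cast Int.one_le_abs hm
  by_cases hlt : x < 1/2
  · have : ∀ m : ℤ, ww L m u = 0 := by
      intro m
      apply Set.indicator_of_notMem
      rintro ⟨h1, h2, h3⟩
      have := hone m h1
      linarith
    simp [this]
  · push Not at hlt
    have hxp : 0 < x := by linarith
    rw [tsum_eq_sum (s := Finset.Icc (-⌊2*x⌋) ⌊2*x⌋)]
    · calc _ ≤ ∑ m ∈ Finset.Icc (-⌊2*x⌋) ⌊2*x⌋, ENNReal.ofReal (2 * L / x) := by
            apply Finset.sum_le_sum
            intro m _
            unfold ww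
            apply Set.indicator_apply_le
            rintro ⟨h1, h2, h3⟩
            apply ENNReal.ofReal_le_ofReal
            gcongr
        _ ≤ ENNReal.ofReal (4 * x + 1) * ENNReal.ofReal (2 * L / x) := by
            rw [Finset.sum_const, nsmul_eq_mul]
            gcongr
            rw [← ENNReal.ofReal_natCast]
            apply ENNReal.ofReal_le_ofReal
            have hf : 0 ≤ ⌊2*x⌋ := Int.floor_nonneg.2 (by linarith)
            have hc : ((Finset.Icc (-⌊2*x⌋) ⌊2*x⌋).card : ℤ) = 2 * ⌊2*x⌋ + 1 := by
              rw [Int.card_Icc]; omega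
            have hc' : ((Finset.Icc (-⌊2*x⌋) ⌊2*x⌋).card : ℝ) = 2 * ⌊2*x⌋ + 1 := by exact_mod_cast hc
            rw [hc']
            linarith [Int.floor_le (2*x)]
        _ ≤ _ := by
            rw [← ENNReal.ofReal_mul (by positivity)]
            apply ENNReal.ofReal_le_ofReal
            rw [mul_div_assoc', div_le_iff₀ hxp]
            nlinarith
    · intro m hm
      apply Set.indicator_of_notMem
      rintro ⟨h1, h2, h3⟩
      apply hm
      have h3' : |(m:ℝ)| ≤ 2 * x := by rw [hx]; linarith
      have : |m| ≤ ⌊2*x⌋ := by rw [Int.le_floor]; exact_mod_cast h3'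
      rw [Finset.mem_Icc]
      exact abs_le.1 this

lemma var_term (L : ℝ) (hL : 0 < L) (H : ℝ → ENNReal) (m : ℤ) :
    ∫⁻ θ in Set.Icc L (2*L), ENNReal.ofReal (1/θ) * (if m = 0 then 0 else H (m/θ)) ≤
      ∫⁻ u, ww L m u * H u := by
  by_cases hm : m = 0
  · simp [hm]
  have hmR : (m:ℝ) ≠ 0 := by exact_mod_cast hm
  have hma : 0 < |(m:ℝ)| := abs_pos.2 hmR
  have himg := lintegral_image_eq_lintegral_abs_deriv_mul (s := Set.Icc L (2*L)) (f := fun θ => (m:ℝ)/θ)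
    (f' := fun θ => -(m:ℝ)/θ^2) measurableSet_Icc (by
      intro θ hθ
      have hp : θ ≠ 0 := by have := hθ.1; linarith
      have := (hasDerivAt_inv hp).const_mul (m:ℝ)
      refine HasDerivAt.hasDerivWithinAt ?_
      refine (this.congr_deriv ?_)
      field_simp) (by
      intro a ha b hb hab
      have hp : 0 < a := by have := ha.1; linarith
      have hp : 0 < b := by have := hb.1; linarith
      simp only at hab
      field_simp at hab
      exact hab.symm) (fun u => ww L m u * H u)
  calc _ ≤ ∫⁻ θ in Set.Icc L (2*L), ENNReal.ofReal |-(m:ℝ)/θ^2| * (ww L m (m/θ) * H (m/θ)) := by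
        apply setLIntegral_mono' measurableSet_Icc
        intro θ hθ
        have hp : 0 < θ := by have := hθ.1; linarith
        rw [if_neg hm, ← mul_assoc]
        gcongr
        have hu : |(m:ℝ)/θ| = |(m:ℝ)|/θ := by rw [abs_div, abs_of_pos hp]
        have : ww L m (m/θ) = ENNReal.ofReal (2 * L / |(m:ℝ)|) := by
          unfold ww
          rw [Set.indicator_of_mem]
          refine ⟨hm, ?_, ?_⟩
          · rw [hu, mul_div_assoc', div_le_iff₀ hp]
            nlinarith [hθ.1]
          · rw [hu, mul_div_assoc', le_div_iff₀ hp]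
            nlinarith [hθ.2]
        rw [this, ← ENNReal.ofReal_mul (by positivity)]
        apply ENNReal.ofReal_le_ofReal
        rw [abs_div, abs_neg, abs_of_pos (by positivity : 0 < θ^2)]
        rw [div_mul_div_comm, div_le_div_iff₀ hp (by positivity)]
        nlinarith [mul_nonneg (mul_pos hp hma).le (sub_nonneg.2 hθ.2)]
    _ = _ := himg.symm
    _ ≤ _ := setLIntegral_le_lintegral _ _

lemma var_total (g : ℝ → ℂ) (N : ℕ) (hN : 0 < N) (hg : Measurable g) (hC : ∀ x, ‖g x‖ ≤ 1)
    (h0 : ∀ x, (N:ℝ) < x → g x = 0) (L : ℝ) (hL : 1 ≤ L) :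
    ∫⁻ θ in Set.Icc L (2*L), ∫⁻ η in Set.Ioc 0 θ, ENNReal.ofReal (‖FF g N θ η‖^2)
      ≤ ENNReal.ofReal (12 * L * N) := by
  have hc := continuous_GG g N hg hC
  have hL0 : 0 < L := by linarith
  have hH : Measurable (fun u => ENNReal.ofReal (‖GG g N u‖^2)) :=
    (ENNReal.continuous_ofReal.comp (hc.norm.pow 2)).measurable
  calc _ = ∫⁻ θ in Set.Icc L (2*L), ∑' m : ℤ, ENNReal.ofReal (1/θ) * (if m = 0 then 0 else ENNReal.ofReal (‖GG g N (m/θ)‖^2)) := by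
        apply setLIntegral_congr_fun measurableSet_Icc
        intro θ hθ
        exact FF_var g N hg hC h0 θ (hL.trans hθ.1)
    _ = ∑' m : ℤ, ∫⁻ θ in Set.Icc L (2*L), ENNReal.ofReal (1/θ) * (if m = 0 then 0 else ENNReal.ofReal (‖GG g N (m/θ)‖^2)) := by
        apply lintegral_tsum
        intro m
        apply Measurable.aemeasurable
        split_ifs
        · fun_prop
        · exact (by fun_prop : Measurable fun θ : ℝ => ENNReal.ofReal (1/θ)).mul (hH.comp (by fun_prop : Measurable fun θ : ℝ => (m:ℝ)/θ))
    _ ≤ ∑' m : ℤ, ∫⁻ u, ww L m u * ENNReal.ofReal (‖GG g N u‖^2) :=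
        ENNReal.tsum_le_tsum fun m => var_term L hL0 (fun u => ENNReal.ofReal (‖GG g N u‖^2)) m
    _ = ∫⁻ u, ∑' m : ℤ, ww L m u * ENNReal.ofReal (‖GG g N u‖^2) := by
        rw [lintegral_tsum]
        intro m
        exact ((ww_meas L m).mul hH).aemeasurable
    _ ≤ ∫⁻ u, ENNReal.ofReal (12 * L) * ENNReal.ofReal (‖GG g N u‖^2) := by
        apply lintegral_mono
        intro u
        dsimp only
        rw [ENNReal.tsum_mul_right]
        gcongr
        exact ww_sum L hL0 u
    _ = ENNReal.ofReal (12 * L) * ∫⁻ u, ENNReal.ofReal (‖GG g N u‖^2) := lintegral_const_mul _ hH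
    _ ≤ ENNReal.ofReal (12 * L) * ENNReal.ofReal N := by
        gcongr
        exact plancherel g N (by exact_mod_cast hN) hg hC
    _ = _ := by rw [← ENNReal.ofReal_mul (by positivity)]

noncomputable def BB (g : ℝ → ℂ) (N : ℕ) (L T : ℝ) : Set (ℝ × ℝ) :=
  {p | p.1 ∈ Set.Icc L (2*L) ∧ (0 ≤ p.2 ∧ p.2 < p.1) ∧ T ≤ ‖FF g N p.1 p.2‖}

lemma BB_meas (g : ℝ → ℂ) (N : ℕ) (hg : Measurable g) (L T : ℝ) : MeasurableSet (BB g N L T) := by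
  refine MeasurableSet.inter (measurable_fst measurableSet_Icc) (MeasurableSet.inter (MeasurableSet.inter ?_ ?_) ?_)
  · exact measurableSet_le measurable_const measurable_snd
  · exact measurableSet_lt measurable_snd measurable_fst
  · exact measurableSet_le measurable_const (FF_meas g N hg).norm

lemma BB_vol (g : ℝ → ℂ) (N : ℕ) (hN : 0 < N) (hg : Measurable g) (hC : ∀ x, ‖g x‖ ≤ 1)
    (h0 : ∀ x, (N:ℝ) < x → g x = 0) (L T : ℝ) (hL : 1 ≤ L) (hT0 : 0 < T) :
    ENNReal.ofReal (T^2) * volume (BB g N L T) ≤ ENNReal.ofReal (12 * L * N) := by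
  have hB := BB_meas g N hg L T
  refine le_trans ?_ (var_total g N hN hg hC h0 L hL)
  rw [Measure.volume_eq_prod, Measure.prod_apply hB]
  rw [← lintegral_const_mul _ (measurable_measure_prodMk_left hB)]
  rw [← lintegral_indicator measurableSet_Icc]
  apply lintegral_mono
  intro θ
  dsimp only
  by_cases hθ : θ ∈ Set.Icc L (2*L)
  · rw [Set.indicator_of_mem hθ]
    have hm : Measurable (fun η => FF g N θ η) := (FF_meas g N hg).comp (by fun_prop : Measurable (fun η : ℝ => (θ, η)))
    have hmk := mul_meas_ge_le_lintegral (μ := volume.restrict (Set.Ico 0 θ)) (f := fun η => ENNReal.ofReal (‖FF g N θ η‖^2))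
      (by fun_prop) (ENNReal.ofReal (T^2))
    rw [restrict_Ico_eq_restrict_Ioc] at hmk
    refine le_trans ?_ hmk
    refine mul_le_mul_right ?_ _
    rw [← restrict_Ico_eq_restrict_Ioc, Measure.restrict_apply' measurableSet_Ico]
    apply measure_mono
    rintro η ⟨_, h2, h3⟩
    refine ⟨?_, h2⟩
    apply ENNReal.ofReal_le_ofReal
    dsimp only at h3
    gcongr
  · have : Prod.mk θ ⁻¹' BB g N L T = ∅ := by
      ext η
      simp only [Set.mem_preimage, Set.mem_empty_iff_false, iff_false]
      exact fun hb => hθ hb.1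
    rw [this]; simp

theorem discrepancy_outside_exceptional_set
    (S : Set ℝ) (hS : MeasurableSet S) (ℓ : ℕ) (h : ℕ) (hh : 0 < h)
    (M N : ℕ) (hM : 2 ^ ℓ ≤ M) (hMN : M < N) (hN : 2 ^ (ℓ + 1) ≤ N) :
    ∃ B : Set (ℝ × ℝ), MeasurableSet B ∧
      volume B ≤ ENNReal.ofReal ((2:ℝ) ^ (ℓ + 13) / ((h : ℝ) * Real.log (1 + h) ^ 2)) ∧
      ∀ θ η : ℝ, (2:ℝ)^ℓ ≤ θ → θ ≤ (2:ℝ)^(ℓ+1) → 0 ≤ η → η < θ → (θ, η) ∉ B →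
        |(Nat.card {k : ℕ | (k : ℝ) * θ + η ∈ S ∩ Set.Icc (0:ℝ) (N:ℝ)} : ℝ) -
            (1 / θ) * (volume (S ∩ Set.Icc (0:ℝ) (N:ℝ))).toReal| <
          2 * N / M + Real.sqrt ((h : ℝ) * N * M) * Real.log (1 + h) + 2 := by
  classical
  set T : ℝ := 2 * N / M + Real.sqrt ((h : ℝ) * N * M) * Real.log (1 + h) + 2 with hTdef
  have hMpos : 1 ≤ M := le_trans Nat.one_le_two_pow hM
  have hMR : (1:ℝ) ≤ M := by exact_mod_cast hMpos
  have hNpos : 0 < N := by omega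
  have hNR : (0:ℝ) < N := by exact_mod_cast hNpos
  have hhR : (0:ℝ) < h := by exact_mod_cast hh
  have hlog : 0 < Real.log (1 + h) := Real.log_pos (by linarith)
  have hT0 : 0 < T := by positivity
  have hT2 : (h:ℝ) * N * Real.log (1+h)^2 ≤ T^2 := by
    have h1 : Real.sqrt ((h : ℝ) * N * M) * Real.log (1 + h) ≤ T := by
      have : 0 ≤ 2 * (N:ℝ) / M := by positivity
      linarith
    calc (h:ℝ) * N * Real.log (1+h)^2 ≤ (h * N * M) * Real.log (1+h)^2 := by
          apply mul_le_mul_of_nonneg_right _ (sq_nonneg _)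
          nlinarith [mul_pos hhR hNR]
      _ = (Real.sqrt ((h : ℝ) * N * M) * Real.log (1 + h))^2 := by
          rw [mul_pow, Real.sq_sqrt (by positivity)]
      _ ≤ T^2 := by gcongr
  set E : Set ℝ := S ∩ Set.Icc (0:ℝ) (N:ℝ) with hE
  have hEm : MeasurableSet E := hS.inter measurableSet_Icc
  let g : ℝ → ℂ := E.indicator (fun _ => 1)
  have hg : Measurable g := measurable_const.indicator hEm
  have hC : ∀ x, ‖g x‖ ≤ 1 := by
    intro x
    by_cases hx : x ∈ E <;> simp [g, hx]
  have h0 : ∀ x, (N:ℝ) < x → g x = 0 := by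
    intro x hx
    apply Set.indicator_of_notMem
    rintro ⟨_, _, h3⟩
    linarith
  set L : ℝ := 2^ℓ with hLdef
  have hL : 1 ≤ L := one_le_pow₀ (by norm_num)
  have h2L : (2:ℝ)^(ℓ+1) = 2 * L := by rw [hLdef]; ring
  refine ⟨BB g N L T, BB_meas g N hg L T, ?_, ?_⟩
  · have key := BB_vol g N hNpos hg hC h0 L T hL hT0
    have hTp : 0 < T^2 := by positivity
    have : volume (BB g N L T) ≤ ENNReal.ofReal (12 * L * N / T^2) := by
      rw [ENNReal.ofReal_div_of_pos hTp, ENNReal.le_div_iff_mul_le (by left; simpa using hT0.ne') (by left; simp), mul_comm]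
      exact key
    refine this.trans (ENNReal.ofReal_le_ofReal ?_)
    rw [div_le_div_iff₀ hTp (by positivity)]
    have h13 : (2:ℝ)^(ℓ+13) = 8192 * L := by rw [hLdef, pow_add]; norm_num; ring
    rw [h13]
    calc 12 * L * N * (h * Real.log (1+h)^2) = 12 * L * (h * N * Real.log (1+h)^2) := by ring
      _ ≤ 12 * L * T^2 := by gcongr
      _ ≤ 8192 * L * T^2 := by gcongr; norm_num
  · intro θ η hθ1 hθ2 hη1 hη2 hnot
    have hθpos : 0 < θ := by linarith
    have hlt : ‖FF g N θ η‖ < T := by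
      by_contra hcon
      push Not at hcon
      exact hnot ⟨⟨hθ1, by rw [← h2L]; exact hθ2⟩, ⟨hη1, hη2⟩, hcon⟩
    convert hlt using 1
    rw [← Real.norm_eq_abs, ← Complex.norm_real]
    have hcard : (Nat.card {k : ℕ | (k : ℝ) * θ + η ∈ E}) = ((Finset.range (N+1)).filter (fun k : ℕ => (k : ℝ) * θ + η ∈ E)).card := by
      have : {k : ℕ | (k : ℝ) * θ + η ∈ E} = (((Finset.range (N+1)).filter (fun k : ℕ => (k : ℝ) * θ + η ∈ E) : Finset ℕ) : Set ℕ) := by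
        ext k
        simp only [Set.mem_ofPred_eq, Finset.coe_filter, Finset.mem_range]
        refine ⟨fun hk => ⟨?_, hk⟩, fun hk => hk.2⟩
        have h1 : (k:ℝ) * θ + η ≤ N := hk.2.2
        have h2 : (k:ℝ) ≤ N := by nlinarith [(Nat.cast_nonneg k : (0:ℝ) ≤ k)]
        have h3 : k ≤ N := by exact_mod_cast h2
        omega
      rw [this, Nat.card_coe_set_eq, Set.ncard_coe_finset]
    have hG : GG g N 0 = ((volume E).toReal : ℂ) := by
      unfold GG
      have : ∀ x, g x * ee 0 x = g x := by intro x; simp [ee]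
      simp only [this]
      rw [intervalIntegral.integral_of_le hNR.le, ← integral_Icc_eq_integral_Ioc]
      rw [integral_indicator hEm, Measure.restrict_restrict hEm]
      have h4 : E ∩ Set.Icc 0 (N:ℝ) = E := Set.inter_eq_left.2 Set.inter_subset_right
      rw [h4]
      simp [Measure.real]
    have hsum : ∑ k ∈ Finset.range (N+1), g (k * θ + η) = (((Finset.range (N+1)).filter (fun k : ℕ => (k : ℝ) * θ + η ∈ E)).card : ℂ) := by
      rw [Finset.card_filter]
      push_cast
      refine Finset.sum_congr rfl fun k _ => ?_
      simp only [g, Set.indicator_apply]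
    rw [FF, hG, hsum, hcard]
    push_cast
    congr 2
    rw [one_div, div_eq_mul_inv, mul_comm]
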